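/- Set Π₀ = Π ∩ G₀ and K₀ = K ∩ G₀. Then G₀ is the union of exactly 6 pairwise disjoint double cosets Π₀γK₀ with γ ∈ G₀; of these 6 double cosets, exactly 3 are contained in the double coset ΠK of G, exactly 1 is contained in ΠbK, and exactly 2 are contained in Πb⁻¹K. -/

import Mathlib

/-!
The group `K = ⟨u, v⟩` consists of the elements `jᵃ vᵈ sᵢ` with `a < 12`, `d < 4`, `i < 6`, where
`j` is central in `K` with `j¹² = 1` (`gj_pow`) and `s₀, …, s₅` represent the cosets of `⟨j, v⟩`; right
multiplication by `u` and `v` in this normal form is given by `s_mul_u` and `s_mul_v`.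

The group `G` acts on the right on the `864 = 3 · 288` points `(e, a, d, i)`, the point standing for
the coset `Π bᵉ jᵃ vᵈ sᵢ`: `u` and `v` act through the normal form in `K`, and `b` through an
explicit permutation. The relations of `G` are verified on points (`genPerm_rels`), which gives
the action `phi`. The generators of `Π` fix the point `0` (`act_Pi`). Conversely the action agrees
with the one on the cosets of `Π`: this holds for `u` and `v` by construction, and for `b` by a coset
enumeration (`good_b`), in which each image under `b` is deduced, by induction on a recorded rank,
from a generator of `Π` or from one of the relations. Hence `Π` is the whole stabilizer of `0`
(`mem_Pi_of_act_eq`), and `Π bᵉ K` is the set of elements taking `0` into the `e`-th orbit of `K`.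

All of `G₀` commutes with `v`, and the centralizer of `v` in `K` is `⟨j, v⟩`, so `K₀ = ⟨j, v⟩`
(`K0_eq`). Therefore the double cosets `Π₀ γ K₀` in `G₀` correspond to the `⟨j, v⟩`-orbits in the
orbit of `0` under `G₀`: the orbit is an invariant of the double coset (`act_doset`), and two
elements of `G₀` taking `0` into one orbit lie in one double coset. A finite check shows that the
`G₀`-orbit of `0` is made of six such orbits, those of the images of `0` under the representatives
`gam` (`orbit_act`, `exists_reach`); three of them have `e = 0`, one `e = 1` and two `e = 2`, and
`b² = b⁻¹` (`doset_subset_iff`, `card_dosets`).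
-/

/-- Generators of the Cartwright–Steger lattice presentation. -/
inductive CSgen : Type
  | u : CSgen
  | v : CSgen
  | b : CSgen

open FreeGroup in
/-- Relators of the Cartwright–Steger lattice:
`u³ = v⁴ = b³ = 1`, `(uv)² = (vu)²`, `vb = bv`, `(buv)³ = 1`, `(buvu)²v = 1`. -/
def csRels : Set (FreeGroup CSgen) :=
  { (of CSgen.u) ^ 3,
    (of CSgen.v) ^ 4,
    (of CSgen.b) ^ 3,
    (of CSgen.u * of CSgen.v) ^ 2 * ((of CSgen.v * of CSgen.u) ^ 2)⁻¹,
    of CSgen.v * of CSgen.b * (of CSgen.b * of CSgen.v)⁻¹,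
    (of CSgen.b * of CSgen.u * of CSgen.v) ^ 3,
    (of CSgen.b * of CSgen.u * of CSgen.v * of CSgen.u) ^ 2 * of CSgen.v }

/-- The Cartwright–Steger lattice, as an abstract presented group. -/
abbrev CS : Type := PresentedGroup csRels

def gu : CS := PresentedGroup.of CSgen.u
def gv : CS := PresentedGroup.of CSgen.v
def gb : CS := PresentedGroup.of CSgen.b
/-- `j = (uv)²`. -/
def gj : CS := (gu * gv) ^ 2

/-- `a₁ = vuv⁻¹j⁴buvj²`. -/
def a1 : CS := gv * gu * gv⁻¹ * gj ^ 4 * gb * gu * gv * gj ^ 2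
/-- `a₂ = v²ubuv⁻¹uv²j`. -/
def a2 : CS := gv ^ 2 * gu * gb * gu * gv⁻¹ * gu * gv ^ 2 * gj
/-- `a₃ = u⁻¹v²uj⁹bv⁻¹uv⁻¹j⁸`. -/
def a3 : CS := gu⁻¹ * gv ^ 2 * gu * gj ^ 9 * gb * gv⁻¹ * gu * gv⁻¹ * gj ^ 8

/-- The subgroup `Π` generated by `a₁`, `a₂`, `a₃`. -/
def PiGrp : Subgroup CS := Subgroup.closure {a1, a2, a3}

lemma a1_mem : a1 ∈ PiGrp := Subgroup.subset_closure (Set.mem_insert _ _)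
lemma a2_mem : a2 ∈ PiGrp :=
  Subgroup.subset_closure (Set.mem_insert_of_mem _ (Set.mem_insert _ _))
lemma a3_mem : a3 ∈ PiGrp :=
  Subgroup.subset_closure (Set.mem_insert_of_mem _ (Set.mem_insert_of_mem _ (Set.mem_singleton _)))

/-- The subgroup `K` generated by `u` and `v` (finite of order 288). -/
def Kgp : Subgroup CS := Subgroup.closure {gu, gv}

/-- The subgroup `G₀` generated by `(jb)⁻¹`, `b`, `j` and `v`
(the stabilizer of the mirror `M₀`). -/
def G0 : Subgroup CS := Subgroup.closure {(gj * gb)⁻¹, gb, gj, gv}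

lemma G0_mem_s2 : (gj * gb)⁻¹ ∈ G0 := Subgroup.subset_closure (Set.mem_insert _ _)
lemma G0_mem_b : gb ∈ G0 :=
  Subgroup.subset_closure (Set.mem_insert_of_mem _ (Set.mem_insert _ _))
lemma G0_mem_j : gj ∈ G0 :=
  Subgroup.subset_closure
    (Set.mem_insert_of_mem _ (Set.mem_insert_of_mem _ (Set.mem_insert _ _)))
lemma G0_mem_v : gv ∈ G0 :=
  Subgroup.subset_closure
    (Set.mem_insert_of_mem _ (Set.mem_insert_of_mem _
      (Set.mem_insert_of_mem _ (Set.mem_singleton _))))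

/-- The double coset `HγK = {hγk : h ∈ H, k ∈ K}`. -/
def doset (γ : CS) (H K : Subgroup CS) : Set CS :=
  {x | ∃ h ∈ H, ∃ k ∈ K, x = h * γ * k}



namespace CartwrightSteger

open CSgen

/-! ### Identities in `K` -/

lemma rel_one {w : FreeGroup CSgen} (h : w ∈ csRels) : PresentedGroup.mk csRels w = 1 :=
  PresentedGroup.one_of_mem h

lemma gu_pow : gu ^ 3 = 1 := rel_one (w := (FreeGroup.of u) ^ 3) (by simp [csRels])

lemma gv_pow : gv ^ 4 = 1 := rel_one (w := (FreeGroup.of v) ^ 4) (by simp [csRels])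

lemma gb_pow : gb ^ 3 = 1 := rel_one (w := (FreeGroup.of b) ^ 3) (by simp [csRels])

lemma uvuv_eq : (gu * gv) ^ 2 = (gv * gu) ^ 2 :=
  mul_inv_eq_one.1 (rel_one (w := (FreeGroup.of u * FreeGroup.of v) ^ 2 *
    ((FreeGroup.of v * FreeGroup.of u) ^ 2)⁻¹) (by simp [csRels]))

lemma vb_comm : gv * gb = gb * gv :=
  mul_inv_eq_one.1 (rel_one (w := FreeGroup.of v * FreeGroup.of b *
    (FreeGroup.of b * FreeGroup.of v)⁻¹) (by simp [csRels]))

lemma buv_pow : (gb * gu * gv) ^ 3 = 1 :=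
  rel_one (w := (FreeGroup.of b * FreeGroup.of u * FreeGroup.of v) ^ 3) (by simp [csRels])

lemma buvu_pow : (gb * gu * gv * gu) ^ 2 * gv = 1 :=
  rel_one (w := (FreeGroup.of b * FreeGroup.of u * FreeGroup.of v * FreeGroup.of u) ^ 2 *
    FreeGroup.of v) (by simp [csRels])

lemma gj_eq : gj = gu * gv * gu * gv := by simp [gj, pow_two, mul_assoc]

lemma gj_eq' : gj = gv * gu * gv * gu := by
  rw [gj, uvuv_eq]; simp [pow_two, mul_assoc]

lemma ju_comm : Commute gj gu := by
  show gj * gu = gu * gj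
  nth_rewrite 1 [gj_eq]; rw [gj_eq']; group

lemma jv_comm : Commute gj gv := by
  show gj * gv = gv * gj
  nth_rewrite 1 [gj_eq']; rw [gj_eq]; group

lemma u_sq : gu * gu = gj⁻¹ * gv * gu * gv := by
  have h : gu * gu = gu⁻¹ := by
    rw [eq_inv_iff_mul_eq_one, ← gu_pow, pow_succ, pow_two]
  rw [h, gj_eq']; group

lemma uvu_eq : gu * gv * gu = gj * gv⁻¹ := by
  rw [gj_eq]; group

lemma gv_cube : gv ^ 3 = gv⁻¹ := by
  rw [eq_inv_iff_mul_eq_one, ← pow_succ, gv_pow]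

/-- The element `X = u v³ u` represents the vertex of the octahedron opposite to the one fixed
by `v`. -/
lemma X_mul_v : (gu * gv ^ 3 * gu) * gv = gj ^ 3 * gv⁻¹ * (gu * gv ^ 3 * gu) := by
  have h : gu * gv⁻¹ * gu = (gj⁻¹) ^ 3 * gv * (gu * gv ^ 3 * gu) * gv := by
    -- substitute `v⁻¹ = j⁻¹ u v u` and `u² = j⁻¹ v u v`
    have hv : gv⁻¹ = gj⁻¹ * (gu * gv * gu) := by rw [uvu_eq]; group
    calc gu * gv⁻¹ * gu = gu * (gj⁻¹ * (gu * gv * gu)) * gu := by rw [← hv]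
      _ = gj⁻¹ * ((gu * gu) * gv * (gu * gu)) := by
        simp only [mul_assoc]; rw [ju_comm.inv_left.symm.left_comm]
      _ = gj⁻¹ * ((gj⁻¹ * gv * gu * gv) * gv * (gj⁻¹ * gv * gu * gv)) := by rw [u_sq]
      _ = _ := by
        simp only [pow_succ, pow_zero, one_mul, mul_assoc,
          jv_comm.inv_left.symm.left_comm, ju_comm.inv_left.symm.left_comm]
  rw [gv_cube] at h ⊢
  rw [show gj ^ 3 * gv⁻¹ * (gu * gv⁻¹ * gu) =
    gj ^ 3 * gv⁻¹ * ((gj⁻¹) ^ 3 * gv * (gu * gv⁻¹ * gu) * gv) by rw [← h]]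
  have hc := (jv_comm.inv_left.inv_right.pow_left 3).eq
  simp only [mul_assoc] at hc ⊢
  rw [← mul_assoc gv⁻¹ (gj⁻¹ ^ 3), ← hc]
  group

/-- The central element `j` of `K` has order dividing `12`: iterate `X v = j³ v⁻¹ X`
four times, where `X = u v³ u`. -/
lemma gj_pow : gj ^ 12 = 1 := by
  have h := X_mul_v
  generalize gu * gv ^ 3 * gu = X at h
  have hs : SemiconjBy X gv (gj ^ 3 * gv⁻¹) := h
  have h4 := hs.pow_right 4
  rw [((jv_comm.pow_left 3).inv_right).mul_pow, inv_pow, gv_pow, ← pow_mul] at h4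
  simpa [SemiconjBy] using h4

/-- Representatives of the six cosets of `⟨j, v⟩` in `K` (the vertices of an octahedron, on which
`K / ⟨j⟩ ≅ S₄` acts by rotations). -/
def s : ℕ → CS
  | 0 => 1
  | 1 => gu
  | 2 => gu * gv
  | 3 => gu * gv ^ 2
  | 4 => gu * gv ^ 3
  | _ => gu * gv ^ 3 * gu

/-- The triple `(c, d, k)` with `s i * u = j ^ c * v ^ d * s k`. -/
def uTab : ℕ → ℕ × ℕ × ℕ
  | 0 => (0, 0, 1)
  | 1 => (11, 1, 2)
  | 2 => (1, 3, 0)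
  | 3 => (2, 3, 4)
  | 4 => (0, 0, 5)
  | _ => (10, 1, 3)

/-- The triple `(c, d, k)` with `s i * v = j ^ c * v ^ d * s k`. -/
def vTab : ℕ → ℕ × ℕ × ℕ
  | 0 => (0, 1, 0)
  | 1 => (0, 0, 2)
  | 2 => (0, 0, 3)
  | 3 => (0, 0, 4)
  | 4 => (0, 0, 1)
  | _ => (3, 3, 5)

lemma inv_pow_j : gj⁻¹ = gj ^ 11 := by
  rw [inv_eq_iff_mul_eq_one, ← pow_succ', gj_pow]

lemma inv_pow_v : gv⁻¹ = gv ^ 3 := by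
  rw [inv_eq_iff_mul_eq_one, ← pow_succ', gv_pow]

lemma s_mul_u (i : ℕ) (hi : i < 6) :
    s i * gu = gj ^ (uTab i).1 * gv ^ (uTab i).2.1 * s (uTab i).2.2 := by
  interval_cases i <;> simp only [s, uTab, pow_zero, pow_one, one_mul, mul_one]
  · rw [← inv_pow_j, u_sq]; group
  · rw [uvu_eq, inv_pow_v]
  · have h1 : gu * gv = gj * gv⁻¹ * gu⁻¹ := by rw [gj_eq]; group
    have h2 : gv * gu = gj * gu⁻¹ * gv⁻¹ := by rw [gj_eq']; group
    have h3 : gu⁻¹ * gu⁻¹ = gu := by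
      rw [← mul_inv_rev, inv_eq_iff_mul_eq_one, ← pow_two, ← pow_succ, gu_pow]
    calc gu * gv ^ 2 * gu = (gu * gv) * (gv * gu) := by simp only [pow_two, mul_assoc]
      _ = gj * gv⁻¹ * gu⁻¹ * (gj * gu⁻¹ * gv⁻¹) := by rw [h1, h2]
      _ = gj ^ 2 * gv⁻¹ * ((gu⁻¹ * gu⁻¹) * gv⁻¹) := by
        simp only [pow_two, mul_assoc, ju_comm.inv_right.symm.left_comm,
          jv_comm.inv_right.symm.left_comm]
      _ = _ := by rw [h3, inv_pow_v]
  · calc gu * gv ^ 3 * gu * gu = gu * gv⁻¹ * (gu * gu) := by rw [gv_cube]; group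
      _ = gu * gv⁻¹ * (gj⁻¹ * gv * gu * gv) := by rw [u_sq]
      _ = gj⁻¹ * (gu * gu * gv) := by
        simp only [mul_assoc, ju_comm.inv_left.symm.left_comm,
          jv_comm.inv_left.inv_right.symm.left_comm, inv_mul_cancel_left]
      _ = gj⁻¹ * (gj⁻¹ * gv * gu * gv * gv) := by rw [u_sq]
      _ = gj⁻¹ * gj⁻¹ * gv * (gu * gv ^ 2) := by simp only [pow_two, mul_assoc]
      _ = _ := by
        congr 2
        rw [← mul_inv_rev, inv_eq_iff_mul_eq_one, ← pow_two, ← pow_add, gj_pow]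

lemma s_mul_v (i : ℕ) (hi : i < 6) :
    s i * gv = gj ^ (vTab i).1 * gv ^ (vTab i).2.1 * s (vTab i).2.2 := by
  interval_cases i <;> simp only [s, vTab, pow_zero, pow_one, one_mul, mul_one]
  · simp only [pow_two, mul_assoc]
  · group
  · rw [mul_assoc, ← pow_succ, gv_pow, mul_one]
  · rw [X_mul_v, inv_pow_v]

/-! ### The action on 864 points -/

/-- The code `((12 e + a) 4 + d) 6 + i` of the point `(e, a, d, i)`, which stands for the coset
`Π bᵉ jᵃ vᵈ sᵢ`. -/
def enc (e a d i : ℕ) : ℕ := ((e * 12 + a) * 4 + d) * 6 + i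

/-- Right multiplication by an element of `K` whose effect on the `s i` is recorded in `t`. -/
def kStep (t : ℕ → ℕ × ℕ × ℕ) (n : ℕ) : ℕ :=
  enc (n / 288) ((n / 24 + (t (n % 6)).1) % 12) ((n / 6 + (t (n % 6)).2.1) % 4) (t (n % 6)).2.2

/-- Right multiplication by `u` on codes of points. -/
def uN : ℕ → ℕ := kStep uTab

/-- Right multiplication by `v` on codes of points. -/
def vN : ℕ → ℕ := kStep vTab

/-- The permutation of the 864 points induced by `b`. Row `r` lists, in base 1000 with the least
significant digit first, the images of the points `24 r, …, 24 r + 23`. -/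
def bRows : List ℕ :=
  [ 656368367370369306590239149083017300183122121124123294521336354348342288,
    685532531530529840278854853856855858551599797731665852751593815725659846,
    85357356355358130557595598597596129850216234228222128784177176175178127,
    299375374373376737657479389323545671591732726720738581184804798792810803,
    752464463466465402686047245179113396279218217220219390329432450444438384,
    781340339338337648086662661664663666359695605827761660847689623821755654,
    181453452451454226365691694693692225658024042036030224592273272271274223,
    395471470469472833753575485419353767687828822816834677280612606600618611,
    848560559562561498782143053275209492087026025028027486425528546540534480,
    589436435434433744182758757760759762455791701635857756655785719629851750,
    277549548547550034461787790789788033754120138132126032688081080079082031,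
    491567566565568641849383293515449863783636630624642773088708702696714707,
    157411410409412594862260259262261588775189188187190582107346345344343576,
    669673676675674264586524523526525282137447446445448276256601604603602270,
    681399398397400749167844843842841683063628627626625617764476475478477839,
    173044043046045268158488487490489267859553556555554266776115118117116265,
    253507506505508690670068067070069684583285284283286678203442441440439672,
    765769772771770072682332331334333090233543542541544084064697700699698078,
    777495494493496845263652651650649779159724723722721713860572571574573647,
    269140139142141076254296295298297075667361364363362074584211214213212073,
    61315314313316786766164163166165780679093092091094774011538537536535768,
    861577580579578168778428427430429186041351350349352180160793796795794174,
    585303302301304653071748747746745587255820819818817809668380379382381743,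
    77236235238237172062392391394393171763457460459458170680019022021020169,
    258347569503413018200015014013016012194101035257191006408325328327326000,
    7040039038037552001215125059281570522371305527437564060502501500499558,
    100831830829832146324825824823826145150836835838837148106292291290289147,
    414705704703706248240716715718717247201710709712711250195319322321320249,
    66443377311509114008111110109112108002197131065287102504421424423422096,
    103136135134133360097023221155089378330467401335533372156310309308307366,
    196639638637640242420633632631634241246644643646645244202388387386385243,
    510801800799802056048812811814813055009806805808807058003415418417416057,
    162539473407317210104207206205208204098005227161095198312517520519518192,
    199232231230229456193119029251185474426563497431341468252406405404403462,
    4735734733736050516729728727730049054740739742741052010484483482481051,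
    318609608607610152144620619622621151105614613616615154099511514513512153 ]

/-- Right multiplication by `b` on codes of points. -/
def bN (n : ℕ) : ℕ := bRows.getD (n / 24) 0 / 1000 ^ (n % 24) % 1000

/-- Boolean check of a property on all 864 points. -/
def allPts (f : ℕ → Bool) : Bool := (List.range 864).all f

lemma allPts_spec {f : ℕ → Bool} (h : allPts f = true) (x : Fin 864) : f x = true :=
  List.all_eq_true.1 h x (List.mem_range.2 x.2)

lemma uN_lt (x : Fin 864) : uN x < 864 := by
  have h : allPts (fun n => decide (uN n < 864)) = true := by decide +kernel
  simpa using allPts_spec h x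

lemma vN_lt (x : Fin 864) : vN x < 864 := by
  have h : allPts (fun n => decide (vN n < 864)) = true := by decide +kernel
  simpa using allPts_spec h x

lemma bN_lt (x : Fin 864) : bN x < 864 := by
  have h : allPts (fun n => decide (bN n < 864)) = true := by decide +kernel
  simpa using allPts_spec h x

lemma ruN : allPts (fun n => uN (uN (uN n)) == n) = true := by decide +kernel
lemma rvN : allPts (fun n => vN (vN (vN (vN n))) == n) = true := by decide +kernel
lemma rbN : allPts (fun n => bN (bN (bN n)) == n) = true := by decide +kernel
lemma ruvN : allPts (fun n => vN (uN (vN (uN n))) == uN (vN (uN (vN n)))) = true := by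
  decide +kernel
lemma rvbN : allPts (fun n => bN (vN n) == vN (bN n)) = true := by decide +kernel
lemma rbuvN : allPts (fun n => vN (uN (bN (vN (uN (bN (vN (uN (bN n)))))))) == n) = true := by
  decide +kernel
lemma rbuvuN : allPts (fun n => vN (uN (vN (uN (bN (uN (vN (uN (bN n)))))))) == n) = true := by
  decide +kernel

/-- For each point, the stage at which the coset `Π · rep n · b` is identified in the coset
enumeration; same layout as `bRows`, in base 100. -/
def rankRows : List ℕ :=
  [ 142930312801080102030002363637353503133132293000,
    213331323302040405060703123435363304363634353605,
    23533343536333233343234360405060735383837363736,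
    123233343535131213101132082627282933383536373534,
    383637343531240304010232030001020330113334353530,
    373839393817011920212218323735363719352425262316,
    383738383638153737373737123633343536073736363737,
    143738393637383835363737233637353636021011121336,
    343334353531393938373832003637373533351310111232,
    63132333329373738353630141011080927153737363728,
    10708091004133536373505373738383706220203040103,
    340906070834333734353635383837363736032526272836,
    383132293001340708050602343435363303333132313000,
    323031322901341011120902113637383503343636343504,
    323635353635152627282936093637363536363435323334,
    363536343432373637353533333031312930373738383731,
    363536363432353535333433333130293030143536363531,
    383838363730353636373631143233323131121415161729,
    363738383734353738363735363435353434323031323233,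
    133937383834363636373835343636373736333432333434,
    113533343532373836373833343535363734133331313233,
    323031282930353637383931343434353632363736353633,
    351108091034123233303135353533343535333334353636,
    121011080909103031323110363233303111333230313212,
    353334313202090607070503363536343404343027282901,
    343233343101360708090902353334333203333132293004,
    253334353613353536373514350910110911373737353612,
    332526232437343536373538082526232437353637383737,
    363431323317342122232018351613141515363737373616,
    373836363732242223242533363536333434383031282931,
    373637343528362724252626372425262426111415161727,
    363334353529352829262727363637373527343334343328,
    373738353630373836373831243637373528353233343129,
    103637363534363837383933353536373734363737373835,
    332526272835363634353636343432333436353534353637,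
    361011080935363532333435363634353636263534333434 ]

/-- The stage of a point in the coset enumeration. -/
def rank (n : ℕ) : ℕ := rankRows.getD (n / 24) 0 / 100 ^ (n % 24) % 100

lemma rank_zero : allPts (fun n => rank n != 0 || [0, 288, 106, 13, 203].contains n) = true := by
  decide +kernel

/-- At a point of positive rank, one of the relations `vb = bv`, `b³ = 1`, `(buvu)² v = 1`,
`(buv)³ = 1` identifies its `b`-edge from `b`-edges at points of smaller rank. -/
lemma rank_step : allPts (fun n => rank n == 0 ||
    decide (rank (vN n) < rank n) ||
    decide (rank (bN n) < rank n) && decide (rank (bN (bN n)) < rank n) ||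
    decide (rank (vN (uN (vN (uN (bN n))))) < rank n) ||
    decide (rank (vN (uN (bN n))) < rank n) &&
      decide (rank (vN (uN (bN (vN (uN (bN n)))))) < rank n)) = true := by
  decide +kernel

/-- The self-map of the point set induced by `u`. -/
def uF (x : Fin 864) : Fin 864 := ⟨uN x, uN_lt x⟩

/-- The self-map of the point set induced by `v`. -/
def vF (x : Fin 864) : Fin 864 := ⟨vN x, vN_lt x⟩

/-- The self-map of the point set induced by `b`. -/
def bF (x : Fin 864) : Fin 864 := ⟨bN x, bN_lt x⟩

lemma uF_three (x : Fin 864) : uF (uF (uF x)) = x :=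
  Fin.ext (by simpa [uF] using allPts_spec ruN x)

lemma vF_four (x : Fin 864) : vF (vF (vF (vF x))) = x :=
  Fin.ext (by simpa [vF] using allPts_spec rvN x)

lemma bF_three (x : Fin 864) : bF (bF (bF x)) = x :=
  Fin.ext (by simpa [bF] using allPts_spec rbN x)

/-- The permutations of the 864 points induced by the generators. They live in the opposite group
because `CS` acts on the right. -/
def genPerm : CSgen → (Equiv.Perm (Fin 864))ᵐᵒᵖ
  | u => .op ⟨uF, fun x => uF (uF x), uF_three, uF_three⟩
  | v => .op ⟨vF, fun x => vF (vF (vF x)), vF_four, vF_four⟩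
  | b => .op ⟨bF, fun x => bF (bF x), bF_three, bF_three⟩

lemma genPerm_u (x : Fin 864) : (genPerm u).unop x = uF x := rfl
lemma genPerm_v (x : Fin 864) : (genPerm v).unop x = vF x := rfl
lemma genPerm_b (x : Fin 864) : (genPerm b).unop x = bF x := rfl

lemma genPerm_rels : ∀ r ∈ csRels, FreeGroup.lift genPerm r = 1 := by
  intro r hr
  simp only [csRels, Set.mem_insert_iff, Set.mem_singleton_iff] at hr
  rcases hr with rfl | rfl | rfl | rfl | rfl | rfl | rfl <;>
    simp only [map_mul, map_inv, map_pow, FreeGroup.lift_apply_of, mul_inv_eq_one] <;>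
    refine MulOpposite.unop_injective (Equiv.ext fun x => Fin.ext ?_) <;>
    simp only [pow_succ, pow_zero, one_mul, MulOpposite.unop_mul, MulOpposite.unop_one,
      Equiv.Perm.mul_apply, Equiv.Perm.one_apply, genPerm_u, genPerm_v, genPerm_b, uF, vF, bF]
  · simpa using allPts_spec ruN x
  · simpa using allPts_spec rvN x
  · simpa using allPts_spec rbN x
  · simpa using allPts_spec ruvN x
  · simpa using allPts_spec rvbN x
  · simpa using allPts_spec rbuvN x
  · simpa using allPts_spec rbuvuN x

/-- The right action of `CS` on the 864 points, as a homomorphism. -/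
def phi : CS →* (Equiv.Perm (Fin 864))ᵐᵒᵖ := PresentedGroup.toGroup genPerm_rels

/-- The right action of `CS` on the 864 points. -/
def act (p : Fin 864) (g : CS) : Fin 864 := (phi g).unop p

lemma act_one (p : Fin 864) : act p 1 = p := by simp [act]

lemma act_mul (p : Fin 864) (g h : CS) : act p (g * h) = act (act p g) h := by simp [act]

lemma act_u (p : Fin 864) : act p gu = uF p := by
  rw [act, phi, gu, PresentedGroup.toGroup.of]; rfl

lemma act_v (p : Fin 864) : act p gv = vF p := by
  rw [act, phi, gv, PresentedGroup.toGroup.of]; rfl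

lemma act_b (p : Fin 864) : act p gb = bF p := by
  rw [act, phi, gb, PresentedGroup.toGroup.of]; rfl

lemma act_j (p : Fin 864) : act p gj = vF (uF (vF (uF p))) := by
  simp only [gj_eq, act_mul, act_u, act_v]

lemma act_mul_inv (p : Fin 864) (g : CS) : act (act p g) g⁻¹ = p := by
  rw [← act_mul, mul_inv_cancel, act_one]

lemma act_inv_mul (p : Fin 864) (g : CS) : act (act p g⁻¹) g = p := by
  rw [← act_mul, inv_mul_cancel, act_one]

lemma act_inv_u (p : Fin 864) : act p gu⁻¹ = uF (uF p) := by
  nth_rewrite 1 [← uF_three p]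
  rw [← act_u (uF (uF p)), act_mul_inv]

lemma act_inv_b (p : Fin 864) : act p gb⁻¹ = bF (bF p) := by
  nth_rewrite 1 [← bF_three p]
  rw [← act_b (bF (bF p)), act_mul_inv]

lemma act_inv_v (p : Fin 864) : act p gv⁻¹ = vF (vF (vF p)) := by
  nth_rewrite 1 [← vF_four p]
  rw [← act_v (vF (vF (vF p))), act_mul_inv]

lemma act_pow (p : Fin 864) (g : CS) (n : ℕ) : act p (g ^ n) = (fun x => act x g)^[n] p := by
  induction n with
  | zero => simp [act_one]
  | succ n ih => rw [pow_succ, act_mul, ih, Function.iterate_succ_apply']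

lemma act_a1 : act 0 a1 = 0 := by
  simp only [a1, pow_succ, pow_zero, one_mul, act_mul, act_u, act_v, act_b, act_j, act_inv_v]
  decide +kernel

lemma act_a2 : act 0 a2 = 0 := by
  simp only [a2, pow_succ, pow_zero, one_mul, act_mul, act_u, act_v, act_b, act_j, act_inv_v]
  decide +kernel

lemma act_a3 : act 0 a3 = 0 := by
  simp only [a3, pow_succ, pow_zero, one_mul, act_mul, act_u, act_v, act_b, act_j, act_inv_v,
    act_inv_u]
  decide +kernel

lemma act_Pi {h : CS} (hh : h ∈ PiGrp) : act 0 h = 0 := by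
  induction hh using Subgroup.closure_induction with
  | mem x hx =>
    rcases hx with rfl | rfl | rfl
    exacts [act_a1, act_a2, act_a3]
  | one => exact act_one 0
  | mul x y _ _ hx hy => rw [act_mul, hx, hy]
  | inv x _ hx => nth_rewrite 1 [← hx]; exact act_mul_inv 0 x

/-! ### The stabilizer of the point `0` is `Π` -/

/-- The element `bᵉ jᵃ vᵈ sᵢ` attached to the point `(e, a, d, i)`. -/
def rep (n : ℕ) : CS := gb ^ (n / 288) * (gj ^ (n / 24 % 12) * gv ^ (n / 6 % 4) * s (n % 6))

lemma rep_zero : rep 0 = 1 := by simp [rep, s]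

lemma rep_kStep {t : ℕ → ℕ × ℕ × ℕ} {g : CS} (ht : ∀ i < 6, (t i).2.2 < 6)
    (hg : ∀ i < 6, s i * g = gj ^ (t i).1 * gv ^ (t i).2.1 * s (t i).2.2) (n : ℕ) :
    rep (kStep t n) = rep n * g := by
  have hi : n % 6 < 6 := Nat.mod_lt _ (by norm_num)
  have h1 := ht _ hi
  have h2 := hg _ hi
  generalize hT : t (n % 6) = T at h1 h2
  obtain ⟨c, d, k⟩ := T
  simp only at h1 h2
  have ha : (n / 24 + c) % 12 < 12 := Nat.mod_lt _ (by norm_num)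
  have hd : (n / 6 + d) % 4 < 4 := Nat.mod_lt _ (by norm_num)
  have e1 : kStep t n / 288 = n / 288 := by simp only [kStep, hT, enc]; omega
  have e2 : kStep t n / 24 % 12 = (n / 24 % 12 + c) % 12 := by
    simp only [kStep, hT, enc]; omega
  have e3 : kStep t n / 6 % 4 = (n / 6 % 4 + d) % 4 := by simp only [kStep, hT, enc]; omega
  have e4 : kStep t n % 6 = k := by simp only [kStep, hT, enc]; omega
  rw [rep, rep, e1, e2, e3, e4, ← pow_eq_pow_mod _ gj_pow, ← pow_eq_pow_mod _ gv_pow]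
  simp only [mul_assoc, h2, pow_add]
  rw [(jv_comm.pow_pow c (n / 6 % 4)).left_comm]

lemma rep_u (p : Fin 864) : rep (act p gu) = rep p * gu := by
  rw [act_u]; exact rep_kStep (by decide) s_mul_u p

lemma rep_v (p : Fin 864) : rep (act p gv) = rep p * gv := by
  rw [act_v]; exact rep_kStep (by decide) s_mul_v p

lemma rep_K {k : CS} (hk : k ∈ Kgp) : ∀ p : Fin 864, rep (act p k) = rep p * k := by
  induction hk using Subgroup.closure_induction with
  | mem x hx => rcases hx with rfl | rfl; exacts [rep_u, rep_v]
  | one => intro p; rw [act_one, mul_one]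
  | mul x y _ _ hx hy => intro p; rw [act_mul, hy, hx, mul_assoc]
  | inv x _ hx => intro p; rw [eq_mul_inv_iff_mul_eq, ← hx, act_inv_mul]

lemma gu_mem : gu ∈ Kgp := Subgroup.subset_closure (Set.mem_insert _ _)

lemma gv_mem : gv ∈ Kgp := Subgroup.subset_closure (Set.mem_insert_of_mem _ rfl)

lemma gj_mem : gj ∈ Kgp := pow_mem (mul_mem gu_mem gv_mem) 2

/-- `Good p g` says that `Π · rep p · g = Π · rep (p · g)`, that is, the action of `g` at the
point `p` agrees with the action on the cosets of `Π`. -/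
def Good (p : Fin 864) (g : CS) : Prop := rep p * g * (rep (act p g))⁻¹ ∈ PiGrp

lemma good_one (p : Fin 864) : Good p 1 := by
  simp only [Good, act_one, mul_one, mul_inv_cancel]; exact one_mem _

lemma Good.mul {p : Fin 864} {g h : CS} (h1 : Good p g) (h2 : Good (act p g) h) :
    Good p (g * h) := by
  have := mul_mem h1 h2
  rw [← act_mul] at this
  simpa [Good, mul_assoc] using this

lemma Good.right {p : Fin 864} {g h : CS} (h1 : Good p (g * h)) (h2 : Good p g) :
    Good (act p g) h := by
  have := mul_mem (inv_mem h2) h1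
  rw [act_mul] at this
  simpa [Good, mul_assoc] using this

lemma Good.left {p : Fin 864} {g h : CS} (h1 : Good p (g * h)) (h2 : Good (act p g) h) :
    Good p g := by
  have := mul_mem h1 (inv_mem h2)
  rw [act_mul] at this
  simpa [Good, mul_assoc] using this

lemma good_K {k : CS} (hk : k ∈ Kgp) (p : Fin 864) : Good p k := by
  rw [Good, rep_K hk, mul_inv_cancel]; exact one_mem _

lemma good_Pi {h : CS} (hh : h ∈ PiGrp) : Good 0 h := by
  rw [Good, act_Pi hh]
  simpa [rep_zero] using hh

/-- A generator of `Π` of the form `k b k'` with `k, k' ∈ K` determines one edge of the coset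
graph. -/
lemma good_of_gen {a k k' : CS} (ha : a ∈ PiGrp) (h : a = k * gb * k') (hk : k ∈ Kgp)
    (hk' : k' ∈ Kgp) : Good (act 0 k) gb := by
  have h1 := good_Pi ha
  rw [h] at h1
  exact (h1.left (good_K hk' _)).right (good_K hk 0)

lemma good_start : ∀ n ∈ [0, 288, 106, 13, 203], ∀ p : Fin 864, p.val = n → Good p gb := by
  have hu := gu_mem
  have hv := gv_mem
  have hj := gj_mem
  have h0 : Good 0 gb := by
    have e : act 0 gb = 288 := by rw [act_b]; decide +kernel
    have r : rep (288 : Fin 864) = gb := by simp [rep, s]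
    rw [Good, e, r]
    simp [rep_zero]
  have h1 : Good 288 gb := by
    have e : act 288 gb = 576 := by rw [act_b]; decide +kernel
    have r : rep (288 : Fin 864) = gb := by simp [rep, s]
    have r' : rep (576 : Fin 864) = gb * gb := by simp [rep, s, pow_two]
    rw [Good, e, r, r', mul_inv_cancel]
    exact one_mem _
  have h2 : Good 106 gb := by
    have e : act 0 (gv * gu * gv⁻¹ * gj ^ 4) = 106 := by
      simp only [pow_succ, pow_zero, one_mul, act_mul, act_u, act_v, act_j, act_inv_v]
      decide +kernel
    rw [← e]
    exact good_of_gen (k' := gu * gv * gj ^ 2) a1_mem (by simp only [a1, mul_assoc])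
      (mul_mem (mul_mem (mul_mem hv hu) (inv_mem hv)) (pow_mem hj _))
      (mul_mem (mul_mem hu hv) (pow_mem hj _))
  have h3 : Good 13 gb := by
    have e : act 0 (gv ^ 2 * gu) = 13 := by
      simp only [pow_succ, pow_zero, one_mul, act_mul, act_u, act_v]
      decide +kernel
    rw [← e]
    exact good_of_gen (k' := gu * gv⁻¹ * gu * gv ^ 2 * gj) a2_mem (by simp only [a2, mul_assoc])
      (mul_mem (pow_mem hv _) hu)
      (mul_mem (mul_mem (mul_mem (mul_mem hu (inv_mem hv)) hu) (pow_mem hv _)) hj)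
  have h4 : Good 203 gb := by
    have e : act 0 (gu⁻¹ * gv ^ 2 * gu * gj ^ 9) = 203 := by
      simp only [pow_succ, pow_zero, one_mul, act_mul, act_u, act_v, act_j, act_inv_u]
      decide +kernel
    rw [← e]
    exact good_of_gen (k' := gv⁻¹ * gu * gv⁻¹ * gj ^ 8) a3_mem (by simp only [a3, mul_assoc])
      (mul_mem (mul_mem (mul_mem (inv_mem hu) (pow_mem hv _)) hu) (pow_mem hj _))
      (mul_mem (mul_mem (mul_mem (inv_mem hv) hu) (inv_mem hv)) (pow_mem hj _))
  intro n hn p hp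
  simp only [List.mem_cons, List.not_mem_nil, or_false] at hn
  rcases hn with rfl | rfl | rfl | rfl | rfl
  · rwa [show p = 0 from Fin.ext hp]
  · rwa [show p = 288 from Fin.ext hp]
  · rwa [show p = 106 from Fin.ext hp]
  · rwa [show p = 13 from Fin.ext hp]
  · rwa [show p = 203 from Fin.ext hp]

/-- Deduction from the relation `vb = bv`. -/
lemma good_of_v {p : Fin 864} (h : Good (vF p) gb) : Good p gb := by
  have h1 : Good p (gv * gb) := (good_K gv_mem p).mul (by rwa [act_v])
  rw [vb_comm] at h1
  exact h1.left (good_K gv_mem _)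

/-- Deduction from the relation `b³ = 1`. -/
lemma good_of_b {p : Fin 864} (h : Good (bF p) gb) (h' : Good (bF (bF p)) gb) : Good p gb := by
  have h1 : Good p (gb * (gb * gb)) := by
    rw [show gb * (gb * gb) = 1 by
      rw [← gb_pow]; simp only [pow_succ, pow_zero, one_mul, mul_assoc]]
    exact good_one p
  refine h1.left (Good.mul ?_ ?_)
  · rwa [act_b]
  · rwa [act_b, act_b]

/-- A conjugate of the relator `(buvu)² v`. -/
lemma bjbuvu : gb * (gj * (gb * (gu * gv * gu))) = 1 := by
  have h := buvu_pow
  rw [pow_two, mul_assoc, mul_eq_one_comm] at h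
  rw [gj_eq]
  simpa only [mul_assoc] using h

/-- Deduction from the relation `(buvu)² v = 1`. -/
lemma good_of_buvu {p : Fin 864} (h : Good (vF (uF (vF (uF (bF p))))) gb) : Good p gb := by
  have hk : gu * gv * gu ∈ Kgp := mul_mem (mul_mem gu_mem gv_mem) gu_mem
  have h1 : Good p (gb * (gj * (gb * (gu * gv * gu)))) := by rw [bjbuvu]; exact good_one p
  have h2 : Good (act (act p gb) gj) gb := by rw [act_j, act_b]; exact h
  have h3 : Good (act p gb) (gj * (gb * (gu * gv * gu))) :=
    Good.mul (good_K gj_mem _) (Good.mul h2 (good_K hk _))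
  exact Good.left h1 h3

/-- Deduction from the relation `(buv)³ = 1`. -/
lemma good_of_buv {p : Fin 864} (h : Good (vF (uF (bF p))) gb)
    (h' : Good (vF (uF (bF (vF (uF (bF p)))))) gb) : Good p gb := by
  have hk : gu * gv ∈ Kgp := mul_mem gu_mem gv_mem
  have h1 : Good p (gb * ((gu * gv) * (gb * ((gu * gv) * (gb * (gu * gv)))))) := by
    rw [show gb * ((gu * gv) * (gb * ((gu * gv) * (gb * (gu * gv))))) = 1 by
      rw [← buv_pow]; simp only [pow_succ, pow_zero, one_mul, mul_assoc]]
    exact good_one p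
  refine h1.left ((good_K hk _).mul (Good.mul ?_ ((good_K hk _).mul (Good.mul ?_ (good_K hk _)))))
  · rwa [act_mul, act_b, act_u, act_v]
  · rwa [act_mul, act_mul, act_v, act_u, act_b, act_b, act_v, act_u]

/-- The coset enumeration: every edge `b` is obtained by induction on `rank`. -/
lemma good_b (p : Fin 864) : Good p gb := by
  induction hr : rank p using Nat.strong_induction_on generalizing p with
  | _ r ih =>
    have hs := allPts_spec rank_step p
    have h0 := allPts_spec rank_zero p
    simp only [Bool.or_eq_true, Bool.and_eq_true, decide_eq_true_eq, beq_iff_eq, hr] at hs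
    rcases hs with (((hs | hs) | hs) | hs) | hs
    · have : (p : ℕ) ∈ [0, 288, 106, 13, 203] := by simpa [hs, hr] using h0
      exact good_start _ this p rfl
    · exact good_of_v (ih _ hs (vF p) rfl)
    · exact good_of_b (ih _ hs.1 (bF p) rfl) (ih _ hs.2 (bF (bF p)) rfl)
    · exact good_of_buvu (ih _ hs (vF (uF (vF (uF (bF p))))) rfl)
    · exact good_of_buv (ih _ hs.1 (vF (uF (bF p))) rfl)
        (ih _ hs.2 (vF (uF (bF (vF (uF (bF p)))))) rfl)

lemma good (g : CS) : ∀ p : Fin 864, Good p g := by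
  have hg : g ∈ Subgroup.closure (Set.range (PresentedGroup.of : CSgen → CS)) := by
    rw [PresentedGroup.closure_range_of]; trivial
  induction hg using Subgroup.closure_induction with
  | mem x hx =>
    obtain ⟨c, rfl⟩ := hx
    cases c
    exacts [good_K gu_mem, good_K gv_mem, good_b]
  | one => exact good_one
  | mul x y _ _ hx hy => exact fun p => (hx p).mul (hy _)
  | inv x _ hx =>
    intro p
    have h1 : Good p (x⁻¹ * x) := by rw [inv_mul_cancel]; exact good_one p
    exact h1.left (hx _)

lemma mem_Pi_rep (g : CS) : g * (rep (act 0 g))⁻¹ ∈ PiGrp := by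
  simpa [Good, rep_zero] using good g 0

/-- Elements moving the point `0` to the same place lie in the same coset of `Π`. -/
lemma mem_Pi_of_act_eq {x y : CS} (h : act 0 x = act 0 y) : x * y⁻¹ ∈ PiGrp := by
  have := mul_mem (mem_Pi_rep x) (inv_mem (mem_Pi_rep y))
  rw [h] at this
  simpa [mul_assoc] using this

/-! ### Double cosets in `G₀` -/

/-- A number for the orbit of a point under `⟨j, v⟩`; each of the three orbits of `K` splits into
six of these. -/
def cls (n : ℕ) : ℕ :=
  n / 288 * 6 + if n % 6 = 0 then 0 else if n % 6 = 5 then 5 else 1 + n / 6 % 4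

/-- Left multiplication of the `K`-part by `v`. -/
def lvN : ℕ → ℕ := kStep fun i => (0, 1, i)

lemma lv_uN : allPts (fun n => lvN (uN n) == uN (lvN n)) = true := by decide +kernel
lemma lv_vN : allPts (fun n => lvN (vN n) == vN (lvN n)) = true := by decide +kernel
lemma lvN_ltB : allPts (fun n => decide (lvN n < 864)) = true := by decide +kernel
lemma lvN_fix : allPts (fun n => !(decide (n < 288) && lvN n == vN n) || n % 6 == 0) = true := by
  decide +kernel
lemma uN_div : allPts (fun n => uN n / 288 == n / 288) = true := by decide +kernel
lemma vN_div : allPts (fun n => vN n / 288 == n / 288) = true := by decide +kernel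
lemma cls_vN : allPts (fun n => cls (vN n) == cls n) = true := by decide +kernel
lemma cls_jN : allPts (fun n => cls (vN (uN (vN (uN n)))) == cls n) = true := by decide +kernel

lemma lvN_lt (x : Fin 864) : lvN x < 864 := by simpa using allPts_spec lvN_ltB x

/-- Left multiplication by `v` as a self-map of the point set. -/
def lvF (x : Fin 864) : Fin 864 := ⟨lvN x, lvN_lt x⟩

lemma lvF_act {k : CS} (hk : k ∈ Kgp) : ∀ p, lvF (act p k) = act (lvF p) k := by
  induction hk using Subgroup.closure_induction with
  | mem x hx =>
    intro p
    rcases hx with rfl | rfl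
    · rw [act_u, act_u]; exact Fin.ext (beq_iff_eq.1 (allPts_spec lv_uN p))
    · rw [act_v, act_v]; exact Fin.ext (beq_iff_eq.1 (allPts_spec lv_vN p))
  | one => intro p; rw [act_one, act_one]
  | mul x y _ _ hx hy => intro p; rw [act_mul, hy, hx, act_mul]
  | inv x _ hx =>
    intro p
    have := hx (act p x⁻¹)
    rw [act_inv_mul] at this
    rw [this, act_mul_inv]

lemma div_act {k : CS} (hk : k ∈ Kgp) : ∀ p, (act p k).val / 288 = p.val / 288 := by
  induction hk using Subgroup.closure_induction with
  | mem x hx =>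
    intro p
    rcases hx with rfl | rfl
    · rw [act_u]; exact beq_iff_eq.1 (allPts_spec uN_div p)
    · rw [act_v]; exact beq_iff_eq.1 (allPts_spec vN_div p)
  | one => intro p; rw [act_one]
  | mul x y _ _ hx hy => intro p; rw [act_mul, hy, hx]
  | inv x _ hx => intro p; rw [← hx, act_inv_mul]

lemma G0_comm_v {g : CS} (hg : g ∈ G0) : gv * g = g * gv := by
  have h : G0 ≤ Subgroup.centralizer {gv} := by
    have hb : gb ∈ Subgroup.centralizer {gv} :=
      Subgroup.mem_centralizer_singleton_iff.2 vb_comm.symm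
    have hj : gj ∈ Subgroup.centralizer {gv} :=
      Subgroup.mem_centralizer_singleton_iff.2 jv_comm.eq
    rw [G0, Subgroup.closure_le]
    rintro x (rfl | rfl | rfl | rfl)
    exacts [inv_mem (mul_mem hj hb), hb, hj, Subgroup.mem_centralizer_singleton_iff.2 rfl]
  exact (Subgroup.mem_centralizer_singleton_iff.1 (h hg)).symm

/-- Since `G₀` centralizes `v`, an element of `K ∩ G₀` lies in the centralizer `⟨j, v⟩` of `v`
in `K`. -/
lemma K0_eq {k : CS} (hk : k ∈ Kgp ⊓ G0) : ∃ a d : ℕ, k = gj ^ a * gv ^ d := by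
  have h1 : lvF (act 0 k) = vF (act 0 k) := by
    have h0 : lvF 0 = vF 0 := by decide +kernel
    rw [lvF_act hk.1, h0, ← act_v, ← act_v, ← act_mul, ← act_mul, G0_comm_v hk.2]
  have h2 : (act 0 k).val / 288 = 0 := div_act hk.1 0
  have h3 : (act 0 k).val % 6 = 0 := by
    have h4 := allPts_spec lvN_fix (act 0 k)
    have h5 : lvN (act 0 k) = vN (act 0 k) := congrArg Fin.val h1
    have h6 : (act 0 k).val < 288 := by omega
    simpa [h5, h6] using h4
  have h7 := rep_K hk.1 0
  rw [Fin.val_zero, rep_zero, one_mul] at h7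
  refine ⟨(act 0 k).val / 24 % 12, (act 0 k).val / 6 % 4, h7.symm.trans ?_⟩
  rw [rep, h2, h3, s, pow_zero, one_mul, mul_one]

lemma cls_act_v (p : Fin 864) : cls (act p gv) = cls p := by
  rw [act_v]; exact beq_iff_eq.1 (allPts_spec cls_vN p)

lemma cls_act_j (p : Fin 864) : cls (act p gj) = cls p := by
  rw [act_j]; exact beq_iff_eq.1 (allPts_spec cls_jN p)

lemma cls_act_pow {g : CS} (h : ∀ p, cls (act p g) = cls p) (n : ℕ) (p : Fin 864) :
    cls (act p (g ^ n)) = cls p := by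
  induction n with
  | zero => rw [pow_zero, act_one]
  | succ n ih => rw [pow_succ, act_mul, h, ih]

lemma cls_act {k : CS} (hk : k ∈ Kgp ⊓ G0) (p : Fin 864) : cls (act p k) = cls p := by
  obtain ⟨a, d, rfl⟩ := K0_eq hk
  rw [act_mul, cls_act_pow cls_act_v, cls_act_pow cls_act_j]

/-- The classes met by the orbit of `0` under `G₀`. -/
def orbitCls : List ℕ := [0, 2, 1, 6, 12, 17]

/-- Representatives of the double cosets. -/
def gam : Fin 6 → CS :=
  ![1, gj * gb⁻¹, gb⁻¹ * gj * gb⁻¹, gb, gb⁻¹, gb * gj * gb⁻¹]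

/-- The images of the point `0` under the representatives `gam`. -/
def gamPt : Fin 6 → Fin 864 := ![0, 154, 170, 288, 576, 773]

lemma act_gam (i : Fin 6) : act 0 (gam i) = gamPt i := by
  fin_cases i
  · exact act_one 0
  · show act 0 (gj * gb⁻¹) = 154
    simp only [act_mul, act_j, act_inv_b]; decide +kernel
  · show act 0 (gb⁻¹ * gj * gb⁻¹) = 170
    simp only [act_mul, act_j, act_inv_b]; decide +kernel
  · show act 0 gb = 288
    rw [act_b]; decide +kernel
  · show act 0 gb⁻¹ = 576
    rw [act_inv_b]; decide +kernel
  · show act 0 (gb * gj * gb⁻¹) = 773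
    simp only [act_mul, act_j, act_b, act_inv_b]; decide +kernel

lemma gam_mem (i : Fin 6) : gam i ∈ G0 := by
  have hb := G0_mem_b
  have hj := G0_mem_j
  fin_cases i
  exacts [one_mem _, mul_mem hj (inv_mem hb), mul_mem (mul_mem (inv_mem hb) hj) (inv_mem hb), hb,
    inv_mem hb, mul_mem (mul_mem hb hj) (inv_mem hb)]

lemma cls_gamPt_inj (i i' : Fin 6) (h : cls (gamPt i) = cls (gamPt i')) : i = i' := by
  revert i i'; decide +kernel

lemma orbit_bN : allPts (fun n => orbitCls.contains (cls n) == orbitCls.contains (cls (bN n)))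
    = true := by
  decide +kernel

lemma orbit_act {g : CS} (hg : g ∈ G0) :
    ∀ p, cls (act p g) ∈ orbitCls ↔ cls p ∈ orbitCls := by
  have hb : ∀ p, cls (act p gb) ∈ orbitCls ↔ cls p ∈ orbitCls := by
    intro p
    rw [act_b, ← List.contains_iff_mem, ← List.contains_iff_mem,
      beq_iff_eq.1 (allPts_spec orbit_bN p)]
    rfl
  have hj : ∀ p, cls (act p gj) ∈ orbitCls ↔ cls p ∈ orbitCls := fun p => by rw [cls_act_j]
  induction hg using Subgroup.closure_induction with
  | mem x hx =>
    rcases hx with rfl | rfl | rfl | rfl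
    · intro p
      have h := act_inv_mul p (gj * gb)
      rw [act_mul _ gj gb] at h
      conv_rhs => rw [← h]
      rw [hb, hj]
    · exact hb
    · exact hj
    · intro p; rw [cls_act_v]
  | one => intro p; rw [act_one]
  | mul x y _ _ hx hy => intro p; rw [act_mul, hy, hx]
  | inv x _ hx => intro p; rw [← hx, act_inv_mul]

/-- Within its class, a point is brought by a power of `v` to one differing from `gamPt i` only in
the exponent of `j`. -/
lemma reach_v : allPts (fun n => !(orbitCls.contains (cls n)) ||
    (List.finRange 6).any fun i => (List.range 4).any fun d =>
      vN^[d] n % 24 == gamPt i % 24 && n / 288 == gamPt i / 288) = true := by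
  decide +kernel

lemma reach_j : allPts (fun n => (List.finRange 6).all fun i =>
    !(n % 24 == gamPt i % 24 && n / 288 == gamPt i / 288) ||
      (List.range 12).any fun a => (fun m => vN (uN (vN (uN m))))^[a] n == gamPt i) = true := by
  decide +kernel

lemma val_iterate {f : Fin 864 → Fin 864} {g : ℕ → ℕ} (h : ∀ x, (f x).val = g x) (n : ℕ)
    (x : Fin 864) : (f^[n] x).val = g^[n] x := by
  induction n with
  | zero => rfl
  | succ n ih => rw [Function.iterate_succ_apply', Function.iterate_succ_apply', h, ih]

lemma exists_reach {p : Fin 864} (hp : cls p ∈ orbitCls) :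
    ∃ (i : Fin 6) (d a : ℕ), act p (gv ^ d * gj ^ a) = gamPt i := by
  have h1 := allPts_spec reach_v p
  simp only [Bool.or_eq_true, Bool.not_eq_true', List.any_eq_true, Bool.and_eq_true,
    beq_iff_eq] at h1
  rcases h1 with h1 | ⟨i, -, d, -, h1, h2⟩
  · rw [← List.contains_iff_mem, h1] at hp
    exact absurd hp (by decide)
  have hq : (act p (gv ^ d)).val = vN^[d] p := by
    rw [act_pow, val_iterate]
    intro x; rw [act_v]; rfl
  have hd : (act p (gv ^ d)).val / 288 = p.val / 288 := div_act (pow_mem gv_mem d) p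
  have h3 := allPts_spec reach_j (act p (gv ^ d))
  rw [List.all_eq_true] at h3
  have h4 := h3 i (List.mem_finRange i)
  rw [hd, h2, hq, h1] at h4
  simp only [Bool.or_eq_true, List.any_eq_true, beq_iff_eq, beq_self_eq_true, Bool.and_self,
    Bool.not_true, Bool.false_eq_true, false_or] at h4
  obtain ⟨a, -, h4⟩ := h4
  refine ⟨i, d, a, Fin.ext ?_⟩
  rw [act_mul, act_pow _ gj, val_iterate (g := fun m => vN (uN (vN (uN m)))), hq, h4]
  intro x; rw [act_j]; rfl

lemma act_doset {i : Fin 6} {x : CS} (hx : x ∈ doset (gam i) (PiGrp ⊓ G0) (Kgp ⊓ G0)) :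
    cls (act 0 x) = cls (gamPt i) := by
  obtain ⟨h, hh, k, hk, rfl⟩ := hx
  rw [act_mul, act_mul, act_Pi hh.1, act_gam, cls_act hk]

lemma gam_mem_doset (i : Fin 6) : gam i ∈ doset (gam i) (PiGrp ⊓ G0) (Kgp ⊓ G0) :=
  ⟨1, one_mem _, 1, one_mem _, by simp⟩

lemma gam_injective : Function.Injective gam := by
  intro i i' h
  apply cls_gamPt_inj
  rw [← act_gam, ← act_gam, h]

/-- `Π₀ γᵢ K₀ ⊆ Π bᵉ K` exactly when the point `0 · γᵢ` lies in the `e`-th orbit of `K`. -/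
lemma doset_subset_iff (i : Fin 6) (g : CS) (e : ℕ) (hg : (act 0 g).val / 288 = e)
    (hge : gb ^ e = g) :
    doset (gam i) (PiGrp ⊓ G0) (Kgp ⊓ G0) ⊆ doset g PiGrp Kgp ↔ (gamPt i).val / 288 = e := by
  constructor
  · intro h
    obtain ⟨x, hx, k, hk, hxk⟩ := h (gam_mem_doset i)
    rw [← act_gam, hxk, act_mul, act_mul, act_Pi hx, div_act hk, hg]
  · rintro he x ⟨h, hh, k, hk, rfl⟩
    have h1 := mem_Pi_rep (gam i)
    have hsK : ∀ n, s n ∈ Kgp := by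
      have hu := gu_mem
      have hv := fun n => pow_mem gv_mem n
      intro n
      match n with
      | 0 => exact one_mem _
      | 1 => exact hu
      | 2 => exact mul_mem hu gv_mem
      | 3 => exact mul_mem hu (hv 2)
      | 4 => exact mul_mem hu (hv 3)
      | n + 5 => exact mul_mem (mul_mem hu (hv 3)) hu
    rw [act_gam, rep, he, hge] at h1
    refine ⟨_, mul_mem hh.1 h1, _, mul_mem (mul_mem (mul_mem
      (pow_mem gj_mem ((gamPt i).val / 24 % 12)) (pow_mem gv_mem ((gamPt i).val / 6 % 4)))
      (hsK ((gamPt i).val % 6))) hk.1, ?_⟩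
    simp [mul_assoc]

lemma card_dosets (g : CS) (e c : ℕ) (hg : (act 0 g).val / 288 = e) (hge : gb ^ e = g)
    (hc : (Finset.univ.filter fun i => (gamPt i).val / 288 = e).card = c) :
    Nat.card {γ : CS // γ ∈ Finset.univ.map ⟨gam, gam_injective⟩ ∧
      doset γ (PiGrp ⊓ G0) (Kgp ⊓ G0) ⊆ doset g PiGrp Kgp} = c := by
  have h : {γ : CS | γ ∈ Finset.univ.map ⟨gam, gam_injective⟩ ∧
      doset γ (PiGrp ⊓ G0) (Kgp ⊓ G0) ⊆ doset g PiGrp Kgp} =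
      ((Finset.univ.filter fun i => (gamPt i).val / 288 = e).map ⟨gam, gam_injective⟩ :
        Finset CS) := by
    ext γ
    simp only [Finset.mem_map, Finset.mem_univ, true_and, Function.Embedding.coeFn_mk,
      Set.mem_ofPred_eq, Finset.coe_map, Set.mem_image, Finset.mem_coe, Finset.mem_filter]
    constructor
    · rintro ⟨⟨i, rfl⟩, hi⟩
      exact ⟨i, (doset_subset_iff i g e hg hge).1 hi, rfl⟩
    · rintro ⟨i, hi, rfl⟩
      exact ⟨⟨i, rfl⟩, (doset_subset_iff i g e hg hge).2 hi⟩
  rw [← hc, ← Finset.card_map ⟨gam, gam_injective⟩, ← Set.ncard_coe_finset, ← h]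
  rfl

end CartwrightSteger

open CartwrightSteger

/-- with `Π₀ = Π ∩ G₀` and `K₀ = K ∩ G₀`, the group `G₀` is the union
of exactly 6 pairwise disjoint double cosets `Π₀γK₀` with `γ ∈ G₀`; of these,
exactly 3 are contained in `ΠK`, exactly 1 in `ΠbK`, and exactly 2 in `Πb⁻¹K`. -/
theorem stmt_19 :
    ∃ S : Finset CS, S.card = 6 ∧ (∀ γ ∈ S, γ ∈ G0) ∧
      (S : Set CS).PairwiseDisjoint (fun γ => doset γ (PiGrp ⊓ G0) (Kgp ⊓ G0)) ∧
      (⋃ γ ∈ S, doset γ (PiGrp ⊓ G0) (Kgp ⊓ G0)) = (G0 : Set CS) ∧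
      Nat.card {γ : CS // γ ∈ S ∧ doset γ (PiGrp ⊓ G0) (Kgp ⊓ G0) ⊆ doset 1 PiGrp Kgp} = 3 ∧
      Nat.card {γ : CS // γ ∈ S ∧ doset γ (PiGrp ⊓ G0) (Kgp ⊓ G0) ⊆ doset gb PiGrp Kgp} = 1 ∧
      Nat.card {γ : CS // γ ∈ S ∧ doset γ (PiGrp ⊓ G0) (Kgp ⊓ G0) ⊆ doset gb⁻¹ PiGrp Kgp} = 2 := by
  refine ⟨Finset.univ.map ⟨gam, gam_injective⟩, by simp, ?_, ?_, ?_,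
    card_dosets 1 0 3 (by rw [act_one]; rfl) (pow_zero _) (by decide +kernel),
    card_dosets gb 1 1 (by rw [act_b]; decide +kernel) (pow_one _) (by decide +kernel),
    card_dosets gb⁻¹ 2 2 (by rw [act_inv_b]; decide +kernel) ?_ (by decide +kernel)⟩
  · intro γ hγ
    obtain ⟨i, -, rfl⟩ := Finset.mem_map.1 hγ
    exact gam_mem i
  · intro γ hγ γ' hγ' hne
    obtain ⟨i, -, rfl⟩ := Finset.mem_map.1 hγ
    obtain ⟨i', -, rfl⟩ := Finset.mem_map.1 hγ'
    refine Set.disjoint_left.2 fun x hx hx' => hne ?_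
    exact congrArg gam (cls_gamPt_inj i i' ((act_doset hx).symm.trans (act_doset hx')))
  · ext g
    simp only [Set.mem_iUnion, SetLike.mem_coe]
    constructor
    · rintro ⟨γ, hγ, h, hh, k, hk, rfl⟩
      obtain ⟨i, -, rfl⟩ := Finset.mem_map.1 hγ
      exact mul_mem (mul_mem hh.2 (gam_mem i)) hk.2
    · intro hg
      have h0 : cls (act 0 g) ∈ orbitCls := (orbit_act hg 0).2 (by decide +kernel)
      obtain ⟨i, d, a, h⟩ := exists_reach h0
      rw [← act_mul, ← act_gam] at h
      have hkK : gv ^ d * gj ^ a ∈ Kgp ⊓ G0 :=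
        ⟨mul_mem (pow_mem gv_mem d) (pow_mem gj_mem a),
          mul_mem (pow_mem G0_mem_v d) (pow_mem G0_mem_j a)⟩
      refine ⟨gam i, Finset.mem_map.2 ⟨i, Finset.mem_univ i, rfl⟩, _,
        ⟨mem_Pi_of_act_eq h, G0.mul_mem (G0.mul_mem hg hkK.2) (G0.inv_mem (gam_mem i))⟩, _,
        inv_mem hkK, ?_⟩
      group
  · rw [eq_inv_iff_mul_eq_one, ← pow_succ, gb_pow]
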